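/- Let d ≥ 1 and γ > −1, and in d+1 variables set P_4 = S_{(4)} + a·S_{(3,1)} + b·S_{(2,2)}, where a = −4(γ+4)/(d(γ+1)) and b = 6(γ+3)(γ+4)/(d(γ+1)(γ+2)). Then P_4 is an orthogonal polynomial of degree 4 for W_γ on T^d: for every polynomial q of degree at most 3 in d variables, ∫_{T^d} P_4(x_1,…,x_d, 1−|x|_1) q(x) W_γ(x) dx = 0. -/

import Mathlib

open MeasureTheory Finset

/-- The standard simplex `T^d` in `ℝ^d`. -/
def Td (d : ℕ) : Set (Fin d → ℝ) :=
  {x | (∀ i, 0 ≤ x i) ∧ ∑ i, x i ≤ 1}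

/-- The weight function `W_γ(x) = (x_1 ⋯ x_d (1 - |x|₁))^γ` on `T^d`. -/
noncomputable def Wg (d : ℕ) (γ : ℝ) (x : Fin d → ℝ) : ℝ :=
  ((∏ i, x i) * (1 - ∑ i, x i)) ^ γ

/-- The normalization constant `w_γ = Γ((d+1)(γ+1)) / Γ(γ+1)^(d+1)`. -/
noncomputable def wg (d : ℕ) (γ : ℝ) : ℝ :=
  Real.Gamma ((d + 1) * (γ + 1)) / (Real.Gamma (γ + 1)) ^ (d + 1)

/-- Homogeneous coordinates: `x ↦ (x, 1 - |x|₁) ∈ 𝒯^{d+1}`. -/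
noncomputable def lift (d : ℕ) (x : Fin d → ℝ) : Fin (d + 1) → ℝ :=
  Fin.snoc x (1 - ∑ i, x i)

/-- `P_4 = S_{(4)} + a S_{(3,1)} + b S_{(2,2)}` in `d+1` real variables. -/
noncomputable def P4eval (d : ℕ) (a b : ℝ) (x : Fin (d + 1) → ℝ) : ℝ :=
  (∑ i, x i ^ 4)
    + a * ∑ i, ∑ j ∈ Finset.univ.filter (fun j => j ≠ i), x i ^ 3 * x j
    + b * ∑ i, ∑ j ∈ Finset.univ.filter (fun j => i < j), x i ^ 2 * x j ^ 2

/-!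
For positive parameters, `∏ yᵢ ^ (cᵢ - 1)` on the simplex is, up to a constant, the joint density
of independent gamma variables conditioned on their sum being `1`; as gamma densities form a
convolution semigroup, this gives Dirichlet's integral `∏ Γ(cᵢ) / Γ(∑ cᵢ)`.  Hence multiplying the
weight by a monomial of degree `n` in two coordinates `yᵢ, yⱼ` multiplies its mass by
`(cᵢ)ₖ (cⱼ)ₙ₋ₖ`, up to a factor depending only on `n`.  Tested against a polynomial of degree less
than `n`, the homogeneous Jacobi form of degree `n` in `yᵢ, yⱼ` therefore becomes an `n`-th finite
difference of a polynomial of degree less than `n`, which vanishes; and `P₄` is a multiple of the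
sum of the quartic Jacobi forms over all pairs of coordinates.
-/

open ProbabilityTheory

section GammaConvolution

lemma measurable_gammaPDF (a r : ℝ) : Measurable (gammaPDF a r) :=
  (measurable_gammaPDFReal a r).ennreal_ofReal

lemma lintegral_eq_mul_lintegral_comp_mul_left {f : ℝ → ENNReal} (hf : Measurable f) {s : ℝ}
    (hs : 0 < s) : ∫⁻ x, f x = ENNReal.ofReal s * ∫⁻ y, f (s * y) := by
  conv_lhs => rw [← Real.smul_map_volume_mul_left hs.ne', lintegral_smul_measure,
    lintegral_map hf (by fun_prop), abs_of_pos hs, smul_eq_mul]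

variable {a b r s : ℝ}

lemma gammaPDF_mul_gammaPDF_sub_of_neg (a b r x : ℝ) (hs : s < 0) :
    gammaPDF a r x * gammaPDF b r (s - x) = 0 := by
  rcases lt_or_ge x 0 with hx | hx
  · rw [gammaPDF_of_neg hx, zero_mul]
  · rw [gammaPDF_of_neg (x := s - x) (by linarith), mul_zero]

lemma mul_gammaPDF_mul_gammaPDF_eq_gammaPDF_mul_betaPDF (ha : 0 < a) (hb : 0 < b) (hr : 0 < r)
    (hs : 0 < s) {y : ℝ} (hy₀ : y ≠ 0) (hy₁ : y ≠ 1) :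
    ENNReal.ofReal s * (gammaPDF a r (s * y) * gammaPDF b r (s - s * y)) =
      gammaPDF (a + b) r s * betaPDF a b y := by
  rcases hy₀.lt_or_gt with hneg | hpos
  · rw [betaPDF_eq_zero_of_nonpos hneg.le, gammaPDF_of_neg (mul_neg_of_pos_of_neg hs hneg)]
    simp only [zero_mul, mul_zero]
  rcases hy₁.lt_or_gt with hlt | hgt
  · have hsub : 0 < 1 - y := sub_pos.2 hlt
    rw [← mul_one_sub, betaPDF_of_pos_lt_one hpos hlt, gammaPDF_of_nonneg (by positivity),
      gammaPDF_of_nonneg (by positivity), gammaPDF_of_nonneg hs.le,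
      ← ENNReal.ofReal_mul (by positivity), ← ENNReal.ofReal_mul (by positivity),
      ← ENNReal.ofReal_mul (by positivity)]
    have hexp : Real.exp (-(r * (s * y))) * Real.exp (-(r * (s * (1 - y)))) =
        Real.exp (-(r * s)) := by
      rw [← Real.exp_add]
      ring_nf
    have hpow : s * (s ^ (a - 1) * s ^ (b - 1)) = s ^ (a + b - 1) := by
      nth_rw 1 [← Real.rpow_one s]
      rw [← Real.rpow_add hs, ← Real.rpow_add hs]
      ring_nf
    rw [Real.mul_rpow hs.le hpos.le, Real.mul_rpow hs.le hsub.le, Real.rpow_add hr, ← hexp,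
      ← hpow, beta]
    congr 1
    field_simp
  · rw [betaPDF_eq_zero_of_one_le hgt.le, gammaPDF_of_neg (x := s - s * y) (by nlinarith)]
    simp only [mul_zero]

lemma lintegral_gammaPDF_mul_gammaPDF_sub (ha : 0 < a) (hb : 0 < b) (hr : 0 < r) (hs : s ≠ 0) :
    ∫⁻ x, gammaPDF a r x * gammaPDF b r (s - x) = gammaPDF (a + b) r s := by
  have hma := measurable_gammaPDF a r
  have hmb := measurable_gammaPDF b r
  rcases hs.lt_or_gt with hneg | hpos
  · simp only [gammaPDF_mul_gammaPDF_sub_of_neg a b r _ hneg, lintegral_zero,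
      gammaPDF_of_neg hneg]
  · calc ∫⁻ x, gammaPDF a r x * gammaPDF b r (s - x)
        = ∫⁻ y, ENNReal.ofReal s * (gammaPDF a r (s * y) * gammaPDF b r (s - s * y)) := by
          rw [lintegral_eq_mul_lintegral_comp_mul_left (by fun_prop) hpos,
            lintegral_const_mul _ (by fun_prop)]
      _ = ∫⁻ y, gammaPDF (a + b) r s * betaPDF a b y := by
          refine lintegral_congr_ae ?_
          filter_upwards [Measure.ae_ne volume 0, Measure.ae_ne volume 1] with y hy₀ hy₁
          exact mul_gammaPDF_mul_gammaPDF_eq_gammaPDF_mul_betaPDF ha hb hr hpos hy₀ hy₁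
      _ = gammaPDF (a + b) r s := by
          rw [lintegral_const_mul' (gammaPDF (a + b) r s) _ ENNReal.ofReal_ne_top,
            lintegral_betaPDF_eq_one ha hb, mul_one]

lemma measurable_prod_gammaPDF_mul_gammaPDF_sub {n : ℕ} (c : Fin n → ℝ) (b r s : ℝ) :
    Measurable fun x : Fin n → ℝ ↦
      (∏ i, gammaPDF (c i) r (x i)) * gammaPDF b r (s - ∑ i, x i) := by
  have hm := fun a ↦ measurable_gammaPDF a r
  fun_prop

lemma lintegral_prod_gammaPDF_mul_gammaPDF_sub {n : ℕ} {c : Fin n → ℝ} (hc : ∀ i, 0 < c i)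
    (hb : 0 < b) (hr : 0 < r) (hs : s ≠ 0) :
    ∫⁻ x : Fin n → ℝ, (∏ i, gammaPDF (c i) r (x i)) * gammaPDF b r (s - ∑ i, x i) =
      gammaPDF ((∑ i, c i) + b) r s := by
  induction n generalizing s with
  | zero => simp [lintegral_unique, volume_pi]
  | succ n ih =>
    have hm := fun a ↦ measurable_gammaPDF a r
    have hsum : 0 < (∑ i : Fin n, c i.succ) + b :=
      add_pos_of_nonneg_of_pos (sum_nonneg fun i _ ↦ (hc _).le) hb
    rw [← (volume_preserving_piFinSuccAbove (fun _ : Fin (n + 1) ↦ ℝ) 0).symm.lintegral_comp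
        (measurable_prod_gammaPDF_mul_gammaPDF_sub c b r s), Measure.volume_eq_prod,
      lintegral_prod _ (by fun_prop), Fin.sum_univ_succ, add_assoc,
      ← lintegral_gammaPDF_mul_gammaPDF_sub (hc 0) hsum hr hs]
    refine lintegral_congr_ae ?_
    filter_upwards [Measure.ae_ne volume s] with t ht
    rw [← ih (fun i ↦ hc i.succ) (sub_ne_zero.2 ht.symm), ← lintegral_const_mul _ (by fun_prop)]
    refine lintegral_congr fun y ↦ ?_
    simp [MeasurableEquiv.piFinSuccAbove, Fin.prod_univ_succ, Fin.sum_univ_succ, mul_assoc, sub_sub]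

end GammaConvolution

section HomogeneousCoordinates

variable {d : ℕ} {x : Fin d → ℝ}

@[simp]
lemma lift_castSucc (x : Fin d → ℝ) (i : Fin d) : lift d x i.castSucc = x i := by
  simp [lift]

@[simp]
lemma lift_last (x : Fin d → ℝ) : lift d x (Fin.last d) = 1 - ∑ i, x i := by
  simp [lift]

lemma mem_Td_iff_lift_nonneg : x ∈ Td d ↔ ∀ i, 0 ≤ lift d x i := by
  simp [Td, Fin.forall_fin_succ']

@[fun_prop]
lemma continuous_lift (d : ℕ) : Continuous (lift d) := by
  refine continuous_pi fun i ↦ ?_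
  cases i using Fin.lastCases <;> simp only [lift_castSucc, lift_last] <;> fun_prop

lemma eval_lift_rename_castSucc (q : MvPolynomial (Fin d) ℝ) (x : Fin d → ℝ) :
    MvPolynomial.eval (lift d x) (MvPolynomial.rename Fin.castSucc q) =
      MvPolynomial.eval x q := by
  rw [MvPolynomial.eval_rename]
  congr 2
  exact funext (lift_castSucc x)

lemma isCompact_Td (d : ℕ) : IsCompact (Td d) := by
  have hclosed : IsClosed (Td d) := by
    simp only [Td, Set.ofPred_and, Set.ofPred_forall]
    exact (isClosed_iInter fun i ↦ isClosed_le (by fun_prop) (by fun_prop)).inter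
      (isClosed_le (by fun_prop) (by fun_prop))
  refine isCompact_Icc.of_isClosed_subset hclosed (fun x hx ↦ ⟨hx.1, fun i ↦ ?_⟩ :
    Td d ⊆ Set.Icc 0 1)
  exact (single_le_sum (fun j _ ↦ hx.1 j) (mem_univ i)).trans hx.2

end HomogeneousCoordinates

section DirichletIntegral

variable {d : ℕ} {c : Fin (d + 1) → ℝ} {x : Fin d → ℝ}

/-- The unnormalized density of the Dirichlet distribution on the simplex, written in homogeneous
coordinates.  The exponents are `cᵢ - 1`, so that `c` is the vector of arguments of `Γ` in
Dirichlet's integral and the weight `W_γ` has parameters `cᵢ = γ + 1`. -/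
noncomputable def dirichletWeight (c : Fin (d + 1) → ℝ) (x : Fin d → ℝ) : ℝ :=
  ∏ i, lift d x i ^ (c i - 1)

lemma Wg_eq_dirichletWeight (γ : ℝ) (hx : x ∈ Td d) :
    Wg d γ x = dirichletWeight (fun _ ↦ γ + 1) x := by
  simp only [dirichletWeight, add_sub_cancel_right]
  rw [Real.finsetProd_rpow _ _ (fun i _ ↦ mem_Td_iff_lift_nonneg.1 hx i), Fin.prod_univ_castSucc]
  simp only [Wg, lift_castSucc, lift_last]

lemma prod_lift_pow_mul_dirichletWeight (hc : ∀ i, 0 < c i) (k : Fin (d + 1) → ℕ) (hx : x ∈ Td d) :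
    (∏ i, lift d x i ^ k i) * dirichletWeight c x = dirichletWeight (fun i ↦ c i + k i) x := by
  simp only [dirichletWeight, ← prod_mul_distrib]
  refine prod_congr rfl fun i _ ↦ ?_
  rcases (k i).eq_zero_or_pos with hk | hk
  · simp [hk]
  · have hk' : (1 : ℝ) ≤ k i := by exact_mod_cast hk
    have hne : c i - 1 + k i ≠ 0 := by linarith [hc i]
    rw [mul_comm, ← Real.rpow_add_natCast' (mem_Td_iff_lift_nonneg.1 hx i) hne, sub_add_eq_add_sub]

lemma indicator_Td_dirichletWeight (hc : ∀ i, 0 < c i) (x : Fin d → ℝ) :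
    (Td d).indicator (dirichletWeight c) x =
      (Real.exp 1 * ∏ i, Real.Gamma (c i)) * (∏ i, gammaPDF (c i) 1 (lift d x i)).toReal := by
  by_cases hx : x ∈ Td d
  · have hy := mem_Td_iff_lift_nonneg.1 hx
    have hexp : ∏ i, Real.exp (-lift d x i) = (Real.exp 1)⁻¹ := by
      rw [← Real.exp_sum, ← Real.exp_neg, sum_neg_distrib, Fin.sum_univ_castSucc]
      simp only [lift_castSucc, lift_last, add_sub_cancel]
    have hpdf (i) : (gammaPDF (c i) 1 (lift d x i)).toReal =
        (Real.Gamma (c i))⁻¹ * lift d x i ^ (c i - 1) * Real.exp (-lift d x i) := by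
      have hyi := hy i
      have hci := hc i
      rw [gammaPDF_of_nonneg hyi, ENNReal.toReal_ofReal (by positivity), Real.one_rpow, one_div,
        one_mul]
    have hΓ : ∏ i, Real.Gamma (c i) ≠ 0 :=
      prod_ne_zero_iff.2 fun i _ ↦ (Real.Gamma_pos_of_pos (hc i)).ne'
    rw [Set.indicator_of_mem hx, ENNReal.toReal_prod, prod_congr rfl fun i _ ↦ hpdf i,
      prod_mul_distrib, prod_mul_distrib, hexp, prod_inv_distrib, dirichletWeight]
    field_simp
  · obtain ⟨i, hi⟩ : ∃ i, lift d x i < 0 := by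
      simpa only [mem_Td_iff_lift_nonneg, not_forall, not_le] using hx
    have hzero : ∏ i, gammaPDF (c i) 1 (lift d x i) = 0 :=
      prod_eq_zero (mem_univ i) (gammaPDF_of_neg hi)
    rw [Set.indicator_of_notMem hx, hzero, ENNReal.toReal_zero, mul_zero]

lemma measurable_prod_gammaPDF_lift (c : Fin (d + 1) → ℝ) (r : ℝ) :
    Measurable fun x : Fin d → ℝ ↦ ∏ i, gammaPDF (c i) r (lift d x i) := by
  simpa only [Fin.prod_univ_castSucc, lift_castSucc, lift_last] using
    measurable_prod_gammaPDF_mul_gammaPDF_sub (fun i : Fin d ↦ c i.castSucc) (c (Fin.last d)) r 1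

lemma lintegral_prod_gammaPDF_lift (hc : ∀ i, 0 < c i) {r : ℝ} (hr : 0 < r) :
    ∫⁻ x : Fin d → ℝ, ∏ i, gammaPDF (c i) r (lift d x i) = gammaPDF (∑ i, c i) r 1 := by
  simpa only [Fin.prod_univ_castSucc, Fin.sum_univ_castSucc, lift_castSucc, lift_last] using
    lintegral_prod_gammaPDF_mul_gammaPDF_sub (fun i ↦ hc (Fin.castSucc i)) (hc (Fin.last d)) hr
      one_ne_zero

lemma integrableOn_dirichletWeight (hc : ∀ i, 0 < c i) :
    IntegrableOn (dirichletWeight c) (Td d) := by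
  rw [← integrable_indicator_iff (isCompact_Td d).measurableSet,
    funext (indicator_Td_dirichletWeight hc)]
  refine (integrable_toReal_of_lintegral_ne_top
    (measurable_prod_gammaPDF_lift c 1).aemeasurable ?_).const_mul _
  rw [lintegral_prod_gammaPDF_lift hc one_pos]
  exact ENNReal.ofReal_ne_top

lemma integral_dirichletWeight (hc : ∀ i, 0 < c i) :
    ∫ x in Td d, dirichletWeight c x = (∏ i, Real.Gamma (c i)) / Real.Gamma (∑ i, c i) := by
  have hm := measurable_prod_gammaPDF_lift c 1
  have hlint := lintegral_prod_gammaPDF_lift hc one_pos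
  have hfin : ∀ᵐ x : Fin d → ℝ, ∏ i, gammaPDF (c i) 1 (lift d x i) < ⊤ :=
    ae_lt_top hm (hlint ▸ ENNReal.ofReal_ne_top)
  have hsum : 0 < ∑ i, c i := sum_pos (fun i _ ↦ hc i) univ_nonempty
  rw [← integral_indicator (isCompact_Td d).measurableSet,
    funext (indicator_Td_dirichletWeight hc), integral_const_mul,
    integral_toReal hm.aemeasurable hfin, hlint, gammaPDF_of_nonneg zero_le_one,
    ENNReal.toReal_ofReal (by positivity), Real.one_rpow, Real.one_rpow, mul_one, Real.exp_neg]
  field_simp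

lemma integrableOn_continuous_mul_dirichletWeight (hc : ∀ i, 0 < c i) {f : (Fin d → ℝ) → ℝ}
    (hf : Continuous f) : IntegrableOn (fun x ↦ f x * dirichletWeight c x) (Td d) :=
  (integrableOn_dirichletWeight hc).continuousOn_mul hf.continuousOn (isCompact_Td d)

lemma Gamma_add_natCast_eq_ascPochhammer_mul {z : ℝ} (hz : 0 < z) (n : ℕ) :
    Real.Gamma (z + n) = (ascPochhammer ℝ n).eval z * Real.Gamma z := by
  induction n with
  | zero => simp
  | succ n ih =>
    rw [Nat.cast_succ, ← add_assoc, Real.Gamma_add_one (by positivity), ih, ascPochhammer_succ_eval]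
    ring

lemma integral_prod_lift_pow_mul_dirichletWeight (hc : ∀ i, 0 < c i) (k : Fin (d + 1) → ℕ) :
    ∫ x in Td d, (∏ i, lift d x i ^ k i) * dirichletWeight c x =
      (∏ i, (ascPochhammer ℝ (k i)).eval (c i)) *
        ((∏ i, Real.Gamma (c i)) / Real.Gamma ((∑ i, c i) + (∑ i, k i : ℕ))) := by
  rw [setIntegral_congr_fun (isCompact_Td d).measurableSet
      fun x hx ↦ prod_lift_pow_mul_dirichletWeight hc k hx,
    integral_dirichletWeight fun i ↦ add_pos_of_pos_of_nonneg (hc i) (k i).cast_nonneg]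
  simp only [Gamma_add_natCast_eq_ascPochhammer_mul (hc _), prod_mul_distrib, sum_add_distrib,
    mul_div_assoc, Nat.cast_sum]

lemma prod_apply_single_add_single {ι M : Type*} [Fintype ι] [DecidableEq ι] [CommMonoid M]
    {i j : ι} (hij : i ≠ j) (f : ι → ℕ → M) (hf : ∀ l, f l 0 = 1) (m n : ℕ) :
    ∏ l, f l ((Pi.single i m + Pi.single j n : ι → ℕ) l) = f i m * f j n := by
  rw [prod_eq_mul i j hij (fun l _ hl ↦ by simp [hl.1, hl.2, hf]) (by simp) (by simp)]
  simp [hij, hij.symm]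

lemma integral_lift_pow_mul_lift_pow_mul_dirichletWeight (hc : ∀ i, 0 < c i) {i j : Fin (d + 1)}
    (hij : i ≠ j) (m n : ℕ) :
    ∫ x in Td d, lift d x i ^ m * lift d x j ^ n * dirichletWeight c x =
      (ascPochhammer ℝ m).eval (c i) * (ascPochhammer ℝ n).eval (c j) *
        ((∏ l, Real.Gamma (c l)) / Real.Gamma ((∑ l, c l) + (m + n : ℕ))) := by
  have hmoment := integral_prod_lift_pow_mul_dirichletWeight hc (Pi.single i m + Pi.single j n)
  have hdeg : ∑ l, (Pi.single i m + Pi.single j n : Fin (d + 1) → ℕ) l = m + n := by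
    simp [sum_add_distrib]
  have hmonomial (x : Fin d → ℝ) :=
    prod_apply_single_add_single hij (fun l e ↦ lift d x l ^ e) (fun _ ↦ pow_zero _) m n
  simp only [hmonomial] at hmoment
  rw [prod_apply_single_add_single hij (fun l e ↦ (ascPochhammer ℝ e).eval (c l)) (by simp),
    hdeg] at hmoment
  exact hmoment

end DirichletIntegral

section FiniteDifference

open Polynomial

lemma sum_neg_one_pow_mul_choose_mul_eval_eq_zero {R : Type*} [CommRing R] {P : R[X]} {n : ℕ}
    (hP : P.natDegree < n) :
    ∑ k ∈ range (n + 1), (-1) ^ (n - k) * (n.choose k : R) * P.eval (k : R) = 0 := by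
  have hdiff := congrFun (fwdDiff_iter_eq_zero_of_degree_lt hP) 0
  rw [fwdDiff_iter_eq_sum_shift] at hdiff
  simpa using hdiff

lemma ascPochhammer_eval_mul_eval_add {S : Type*} [CommSemiring S] (x : S) (m k : ℕ) :
    (ascPochhammer S m).eval x * (ascPochhammer S k).eval (x + m) =
      (ascPochhammer S (m + k)).eval x := by
  simp [← ascPochhammer_mul]

variable {K : Type*} [Field K]

lemma ascPochhammer_eval_add_div_eval {x : K} (hx : ∀ k, (ascPochhammer K k).eval x ≠ 0)
    (m k : ℕ) :
    (ascPochhammer K k).eval (x + m) / (ascPochhammer K k).eval x =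
      (ascPochhammer K m).eval (x + k) / (ascPochhammer K m).eval x := by
  rw [div_eq_div_iff (hx k) (hx m), mul_comm, ascPochhammer_eval_mul_eval_add, mul_comm,
    ascPochhammer_eval_mul_eval_add, add_comm]

/-- Each ratio is a polynomial in the summation index, of degree `p` or `q`, because
`(α + p)ₖ / (α)ₖ = (α + k)ₚ / (α)ₚ`; the sum is thus an `n`-th finite difference. -/
lemma sum_neg_one_pow_mul_choose_mul_ascPochhammer_div_eq_zero {α β : K}
    (hα : ∀ k, (ascPochhammer K k).eval α ≠ 0) (hβ : ∀ k, (ascPochhammer K k).eval β ≠ 0)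
    {n p q : ℕ} (hpq : p + q < n) :
    ∑ k ∈ range (n + 1), (-1) ^ (n - k) * (n.choose k : K) *
      ((ascPochhammer K k).eval (α + p) / (ascPochhammer K k).eval α *
        ((ascPochhammer K (n - k)).eval (β + q) / (ascPochhammer K (n - k)).eval β)) = 0 := by
  let P : K[X] := (ascPochhammer K p).comp (X + C α) * (ascPochhammer K q).comp (C (β + n) - X)
  have hP : P.natDegree < n := by
    have hlin₁ : (X + C α).natDegree ≤ 1 := by compute_degree
    have hlin₂ : (C (β + n) - X : K[X]).natDegree ≤ 1 := by compute_degree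
    calc P.natDegree
        ≤ ((ascPochhammer K p).comp (X + C α)).natDegree +
            ((ascPochhammer K q).comp (C (β + n) - X)).natDegree := natDegree_mul_le
      _ ≤ p * 1 + q * 1 := by
          refine add_le_add (natDegree_comp_le.trans ?_) (natDegree_comp_le.trans ?_) <;>
            rw [ascPochhammer_natDegree] <;> gcongr
      _ < n := by rwa [mul_one, mul_one]
  have hterm (k : ℕ) (hk : k ≤ n) :
      (ascPochhammer K k).eval (α + p) / (ascPochhammer K k).eval α *
        ((ascPochhammer K (n - k)).eval (β + q) / (ascPochhammer K (n - k)).eval β) =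
      P.eval (k : K) / ((ascPochhammer K p).eval α * (ascPochhammer K q).eval β) := by
    rw [ascPochhammer_eval_add_div_eval hα, ascPochhammer_eval_add_div_eval hβ, div_mul_div_comm,
      Nat.cast_sub hk, ← add_sub_assoc, add_comm α]
    simp only [P, eval_mul, eval_comp, eval_add, eval_sub, eval_X, eval_C]
  rw [sum_congr rfl fun k hk ↦ by rw [hterm k (mem_range_succ_iff.1 hk), ← mul_div_assoc],
    ← sum_div, sum_neg_one_pow_mul_choose_mul_eval_eq_zero hP, zero_div]

end FiniteDifference

section JacobiForm

/-- The homogeneous form of degree `n` which restricts on `s + t = 1` to a multiple of the Jacobi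
polynomial of degree `n` for the weight `s ^ (α - 1) * t ^ (β - 1)`. -/
noncomputable def jacobiForm (n : ℕ) (α β s t : ℝ) : ℝ :=
  ∑ k ∈ range (n + 1), (-1) ^ (n - k) * (n.choose k : ℝ) /
    ((ascPochhammer ℝ k).eval α * (ascPochhammer ℝ (n - k)).eval β) * (s ^ k * t ^ (n - k))

@[fun_prop]
lemma continuous_jacobiForm (n : ℕ) (α β : ℝ) :
    Continuous fun p : ℝ × ℝ ↦ jacobiForm n α β p.1 p.2 := by
  unfold jacobiForm
  fun_prop

variable {d n : ℕ} {c : Fin (d + 1) → ℝ} {i j : Fin (d + 1)}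

lemma integrableOn_jacobiForm_mul_eval_mul_dirichletWeight (hc : ∀ i, 0 < c i) (n : ℕ) (α β : ℝ)
    (i j : Fin (d + 1)) (p : MvPolynomial (Fin (d + 1)) ℝ) :
    IntegrableOn (fun x ↦ jacobiForm n α β (lift d x i) (lift d x j) *
      MvPolynomial.eval (lift d x) p * dirichletWeight c x) (Td d) := by
  have hJ : Continuous fun x ↦ jacobiForm n α β (lift d x i) (lift d x j) := by fun_prop
  have hp : Continuous fun x ↦ MvPolynomial.eval (lift d x) p :=
    (MvPolynomial.continuous_eval p).comp (continuous_lift d)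
  exact integrableOn_continuous_mul_dirichletWeight hc (hJ.mul hp)

lemma integral_jacobiForm_mul_dirichletWeight (hc : ∀ i, 0 < c i) (hij : i ≠ j) (α β : ℝ) :
    ∫ x in Td d, jacobiForm n α β (lift d x i) (lift d x j) * dirichletWeight c x =
      (∑ k ∈ range (n + 1), (-1) ^ (n - k) * (n.choose k : ℝ) *
        ((ascPochhammer ℝ k).eval (c i) / (ascPochhammer ℝ k).eval α *
          ((ascPochhammer ℝ (n - k)).eval (c j) / (ascPochhammer ℝ (n - k)).eval β))) *
        ((∏ l, Real.Gamma (c l)) / Real.Gamma ((∑ l, c l) + n)) := by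
  simp only [jacobiForm, sum_mul,
    mul_assoc _ (lift d _ i ^ _ * lift d _ j ^ _) (dirichletWeight _ _)]
  rw [integral_finsetSum _ fun k _ ↦
    (integrableOn_continuous_mul_dirichletWeight hc (by fun_prop)).const_mul _]
  refine sum_congr rfl fun k hk ↦ ?_
  have hk' : k ≤ n := mem_range_succ_iff.1 hk
  rw [integral_const_mul, integral_lift_pow_mul_lift_pow_mul_dirichletWeight hc hij,
    Nat.add_sub_cancel' hk']
  ring

lemma integral_jacobiForm_mul_monomial_mul_dirichletWeight (hc : ∀ i, 0 < c i) (hij : i ≠ j)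
    {k : Fin (d + 1) → ℕ} (hk : k i + k j < n) :
    ∫ x in Td d, jacobiForm n (c i) (c j) (lift d x i) (lift d x j) *
      ((∏ l, lift d x l ^ k l) * dirichletWeight c x) = 0 := by
  have hc' (l) : 0 < c l + k l := add_pos_of_pos_of_nonneg (hc l) (k l).cast_nonneg
  have hne (l m) : (ascPochhammer ℝ m).eval (c l) ≠ 0 := (ascPochhammer_pos m _ (hc l)).ne'
  rw [setIntegral_congr_fun (isCompact_Td d).measurableSet fun x hx ↦
      congrArg (_ * ·) (prod_lift_pow_mul_dirichletWeight hc k hx),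
    integral_jacobiForm_mul_dirichletWeight hc' hij,
    sum_neg_one_pow_mul_choose_mul_ascPochhammer_div_eq_zero (hne i) (hne j) hk, zero_mul]

lemma integral_jacobiForm_mul_eval_mul_dirichletWeight (hc : ∀ i, 0 < c i) (hij : i ≠ j)
    {p : MvPolynomial (Fin (d + 1)) ℝ} (hp : p.totalDegree < n) :
    ∫ x in Td d, jacobiForm n (c i) (c j) (lift d x i) (lift d x j) *
      MvPolynomial.eval (lift d x) p * dirichletWeight c x = 0 := by
  have hexpand (x : Fin d → ℝ) : jacobiForm n (c i) (c j) (lift d x i) (lift d x j) *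
      MvPolynomial.eval (lift d x) p * dirichletWeight c x =
        ∑ k ∈ p.support, p.coeff k * (jacobiForm n (c i) (c j) (lift d x i) (lift d x j) *
          ((∏ l, lift d x l ^ k l) * dirichletWeight c x)) := by
    rw [MvPolynomial.eval_eq', mul_sum, sum_mul]
    exact sum_congr rfl fun k _ ↦ by ring
  simp only [hexpand]
  rw [integral_finsetSum]
  · refine sum_eq_zero fun k hk ↦ ?_
    have hdeg : k i + k j < n := calc
      k i + k j = ∑ l ∈ {i, j}, k l := (sum_pair hij).symm
      _ ≤ ∑ l, k l := sum_le_sum_of_subset (subset_univ _)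
      _ = k.sum fun _ e ↦ e := (k.sum_fintype (fun _ e ↦ e) fun _ ↦ rfl).symm
      _ < n := (MvPolynomial.le_totalDegree hk).trans_lt hp
    rw [integral_const_mul, integral_jacobiForm_mul_monomial_mul_dirichletWeight hc hij hdeg,
      mul_zero]
  · intro k _
    simp only [← mul_assoc (jacobiForm _ _ _ _ _)]
    exact (integrableOn_continuous_mul_dirichletWeight hc (by fun_prop)).const_mul _

end JacobiForm

section Quartic

lemma jacobiForm_four {γ : ℝ} (hγ : -1 < γ) (s t : ℝ) :
    (γ + 1) * (γ + 2) * (γ + 3) * (γ + 4) * jacobiForm 4 (γ + 1) (γ + 1) s t =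
      s ^ 4 + t ^ 4 - 4 * (γ + 4) / (γ + 1) * (s ^ 3 * t + t ^ 3 * s) +
        6 * (γ + 3) * (γ + 4) / ((γ + 1) * (γ + 2)) * (s ^ 2 * t ^ 2) := by
  have h₁ : γ + 1 ≠ 0 := by linarith
  have h₂ : γ + 2 ≠ 0 := by linarith
  have h₃ : γ + 3 ≠ 0 := by linarith
  have h₄ : γ + 4 ≠ 0 := by linarith
  have hasc₁ : (ascPochhammer ℝ 1).eval (γ + 1) = γ + 1 := by simp
  have hasc₂ : (ascPochhammer ℝ 2).eval (γ + 1) = (γ + 1) * (γ + 2) := by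
    rw [ascPochhammer_succ_eval, hasc₁]; push_cast; ring
  have hasc₃ : (ascPochhammer ℝ 3).eval (γ + 1) = (γ + 1) * (γ + 2) * (γ + 3) := by
    rw [ascPochhammer_succ_eval, hasc₂]; push_cast; ring
  have hasc₄ : (ascPochhammer ℝ 4).eval (γ + 1) = (γ + 1) * (γ + 2) * (γ + 3) * (γ + 4) := by
    rw [ascPochhammer_succ_eval, hasc₃]; push_cast; ring
  simp only [jacobiForm, Nat.reduceAdd, sum_range_succ, range_one, sum_singleton, tsub_zero,
    Nat.choose, Nat.cast_one, mul_one, ascPochhammer_zero, Polynomial.eval_one, hasc₄, one_mul,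
    pow_zero, Nat.add_one_sub_one, add_zero, Nat.cast_ofNat, ascPochhammer_one, Polynomial.eval_X,
    hasc₃, pow_one, Nat.reduceSub, even_two, Even.neg_pow, one_pow, hasc₂, neg_mul, tsub_self,
    one_div, mul_inv_rev]
  field_simp
  ring

lemma P4eval_eq_sum_jacobiForm {d : ℕ} (hd : 1 ≤ d) {γ : ℝ} (hγ : -1 < γ) {a b : ℝ}
    (ha : a = -(4 * (γ + 4)) / (d * (γ + 1)))
    (hb : b = 6 * (γ + 3) * (γ + 4) / (d * (γ + 1) * (γ + 2))) (y : Fin (d + 1) → ℝ) :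
    P4eval d a b y = (γ + 1) * (γ + 2) * (γ + 3) * (γ + 4) / d *
      ∑ i, ∑ j ∈ Ioi i, jacobiForm 4 (γ + 1) (γ + 1) (y i) (y j) := by
  have hd' : (d : ℝ) ≠ 0 := by positivity
  have hquartic : ∑ i, ∑ j ∈ Ioi i, (y i ^ 4 + y j ^ 4) = d * ∑ i, y i ^ 4 := by
    rw [sum_sum_Ioi_add_eq_sum_sum_off_diag fun _ i ↦ y i ^ 4]
    simp [card_compl, mul_sum]
  have hcubic : ∑ i, ∑ j ∈ Ioi i, (y i ^ 3 * y j + y j ^ 3 * y i) =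
      ∑ i, ∑ j ∈ univ.filter (· ≠ i), y i ^ 3 * y j := by
    rw [sum_sum_Ioi_add_eq_sum_sum_off_diag fun j i ↦ y i ^ 3 * y j]
    refine sum_congr rfl fun i _ ↦ sum_congr ?_ fun _ _ ↦ rfl
    ext
    simp
  have hsum : (γ + 1) * (γ + 2) * (γ + 3) * (γ + 4) *
      ∑ i, ∑ j ∈ Ioi i, jacobiForm 4 (γ + 1) (γ + 1) (y i) (y j) =
        d * ∑ i, y i ^ 4 -
          4 * (γ + 4) / (γ + 1) * ∑ i, ∑ j ∈ univ.filter (· ≠ i), y i ^ 3 * y j +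
          6 * (γ + 3) * (γ + 4) / ((γ + 1) * (γ + 2)) * ∑ i, ∑ j ∈ Ioi i, y i ^ 2 * y j ^ 2 := by
    rw [← hquartic, ← hcubic]
    simp only [mul_sum, ← sum_sub_distrib, ← sum_add_distrib, jacobiForm_four hγ]
  rw [div_mul_eq_mul_div, hsum, P4eval, ha, hb]
  simp only [filter_lt_eq_Ioi]
  field_simp
  ring

end Quartic

/-- For the stated `a`, `b`, `P_4` is orthogonal to all polynomials of degree at most `3`
with respect to `W_γ` on `T^d`. -/
theorem P4_orthogonal
    (d : ℕ) (hd : 1 ≤ d) (γ : ℝ) (hγ : -1 < γ) (a b : ℝ)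
    (ha : a = -(4 * (γ + 4)) / (d * (γ + 1)))
    (hb : b = 6 * (γ + 3) * (γ + 4) / (d * (γ + 1) * (γ + 2))) :
    ∀ q : MvPolynomial (Fin d) ℝ, q.totalDegree ≤ 3 →
      ∫ x in Td d, P4eval d a b (lift d x) * MvPolynomial.eval x q * Wg d γ x = 0 := by
  intro q hq
  let p := MvPolynomial.rename Fin.castSucc q
  have hp : p.totalDegree < 4 :=
    Nat.lt_succ_of_le ((MvPolynomial.totalDegree_rename_le _ q).trans hq)
  have hc (_ : Fin (d + 1)) : 0 < γ + 1 := by linarith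
  have hexpand (x) (hx : x ∈ Td d) : P4eval d a b (lift d x) * MvPolynomial.eval x q * Wg d γ x =
      (γ + 1) * (γ + 2) * (γ + 3) * (γ + 4) / d * ∑ i, ∑ j ∈ Ioi i,
        jacobiForm 4 (γ + 1) (γ + 1) (lift d x i) (lift d x j) * MvPolynomial.eval (lift d x) p *
          dirichletWeight (fun _ ↦ γ + 1) x := by
    simp only [P4eval_eq_sum_jacobiForm hd hγ ha hb, Wg_eq_dirichletWeight γ hx,
      p, eval_lift_rename_castSucc, ← sum_mul, mul_assoc]
  have hint (i j) := integrableOn_jacobiForm_mul_eval_mul_dirichletWeight hc 4 (γ + 1) (γ + 1) i j p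
  rw [setIntegral_congr_fun (isCompact_Td d).measurableSet hexpand, integral_const_mul,
    integral_finsetSum _ fun i _ ↦ integrable_finsetSum _ fun j _ ↦ hint i j]
  refine mul_eq_zero_of_right _ (sum_eq_zero fun i _ ↦ ?_)
  rw [integral_finsetSum _ fun j _ ↦ hint i j]
  exact sum_eq_zero fun j hj ↦
    integral_jacobiForm_mul_eval_mul_dirichletWeight hc (mem_Ioi.1 hj).ne hp
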